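/- arXiv:2102.01002 — 10 statements merged into one kernel-verified Lean document; each statement's English description precedes it below -/
import Mathlib

section
/- Let X ⊆ ℝⁿ be a nonempty convex compact set, F : X → ℝⁿ be continuous and monotone on X, and let T ⊆ ℝ × ℝⁿ × ℝⁿ be a set such that (i) T ⊆ 𝓕[F,X], and (ii') T contains every triple (t, F(x), x) with x ∈ X and t > ⟨F(x),x⟩. Then for every ε > 0: (a) there exists (t,g,x) ∈ T with sup_{y∈X} (t − ⟨g,y⟩) ≤ ε; and (b) for every (t,g,x) ∈ T with sup_{y∈X} (t − ⟨g,y⟩) ≤ ε, one has x ∈ X and sup_{y∈X} ⟨F(y), x − y⟩ ≤ ε. If instead of (ii') the stronger condition holds that (⟨F(x),x⟩, F(x), x) ∈ T for all x ∈ X, then the same conclusions hold for every ε ≥ 0. -/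
open scoped RealInnerProductSpace

/-- `calF F X` is the set `𝓕[F,X]` of the paper. -/
def calF {n : ℕ} (F : EuclideanSpace ℝ (Fin n) → EuclideanSpace ℝ (Fin n))
    (X : Set (EuclideanSpace ℝ (Fin n))) :
    Set (ℝ × EuclideanSpace ℝ (Fin n) × EuclideanSpace ℝ (Fin n)) :=
  {p | p.2.2 ∈ X ∧ ∀ y ∈ X, ⟪F y, p.2.2 - y⟫ ≤ p.1 - ⟪p.2.1, y⟫}

theorem minty_finite {n : ℕ} (X : Set (EuclideanSpace ℝ (Fin n))) (hne : X.Nonempty)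
    (hconv : Convex ℝ X) (hcomp : IsCompact X)
    (F : EuclideanSpace ℝ (Fin n) → EuclideanSpace ℝ (Fin n))
    (hmono : ∀ x ∈ X, ∀ y ∈ X, 0 ≤ ⟪F x - F y, x - y⟫)
    {ι : Type} [Fintype ι] [DecidableEq ι] (y : ι → EuclideanSpace ℝ (Fin n))
    (hy : ∀ i, y i ∈ X) :
    ∃ x ∈ X, ∀ i, ⟪F (y i), x - y i⟫ ≤ 0 := by
  by_contra hcon
  push Not at hcon
  let Φ : EuclideanSpace ℝ (Fin n) → (ι → ℝ) := fun x i => ⟪F (y i), x - y i⟫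
  have hΦc : Continuous Φ := by
    refine continuous_pi fun i => ?_
    exact Continuous.inner continuous_const (continuous_id.sub continuous_const)
  have hC1 : IsCompact (Φ '' X) := hcomp.image hΦc
  have hC2 : Convex ℝ (Φ '' X) := by
    rintro _ ⟨a, ha, rfl⟩ _ ⟨b, hb, rfl⟩ s t hs ht hst
    refine ⟨s • a + t • b, hconv ha hb hs ht hst, ?_⟩
    ext i
    simp only [Φ, Pi.add_apply, Pi.smul_apply, smul_eq_mul, inner_sub_right, inner_add_right,
      inner_smul_right]
    linear_combination ⟪F (y i), y i⟫ * hst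
  have hdisj : Disjoint (Φ '' X) (Set.Iic (0 : ι → ℝ)) := by
    rw [Set.disjoint_left]
    rintro _ ⟨x, hx, rfl⟩ h
    obtain ⟨i, hi⟩ := hcon x hx
    exact absurd (h i) (not_le.mpr hi)
  obtain ⟨f, u, v, h1, huv, h2⟩ :=
    geometric_hahn_banach_compact_closed hC2 hC1 (convex_Iic (𝕜 := ℝ) (0 : ι → ℝ)) isClosed_Iic hdisj
  have hv : v < 0 := by simpa using h2 0 (by simp)
  let l : ι → ℝ := fun i => - f (Pi.single i 1)
  have hf : ∀ a : ι → ℝ, f a = - ∑ i, l i * a i := by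
    intro a
    conv_lhs => rw [pi_eq_sum_univ' a]
    rw [map_sum, ← Finset.sum_neg_distrib]
    refine Finset.sum_congr rfl fun i _ => ?_
    rw [map_smul]
    have : (fun j => if j = i then (1 : ℝ) else 0) = Pi.single i 1 := by
      ext j; simp [Pi.single_apply]
    simp only [this, l, smul_eq_mul]; ring
  have hl : ∀ i, 0 ≤ l i := by
    intro i
    by_contra hneg
    push Not at hneg
    have h := h2 (Pi.single i (-(v / l i))) (by
      intro j
      by_cases hj : j = i
      · subst hj
        simpa using (div_pos_of_neg_of_neg hv hneg).le
      · simp [Pi.single_apply, hj])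
    rw [hf] at h
    simp only [Pi.single_apply, mul_ite, mul_zero, Finset.sum_ite_eq', Finset.mem_univ, if_true] at h
    have : l i * -(v / l i) = -v := by rw [mul_neg, mul_div_cancel₀ _ hneg.ne]
    rw [this] at h
    linarith
  have hpos : ∀ x ∈ X, 0 < ∑ i, l i * ⟪F (y i), x - y i⟫ := by
    intro x hx
    have := h1 _ ⟨x, hx, rfl⟩
    rw [hf] at this
    simp only [Φ] at this
    linarith
  have hS : 0 < ∑ i, l i := by
    refine lt_of_le_of_ne (Finset.sum_nonneg fun i _ => hl i) fun h0 => ?_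
    have hz := (Finset.sum_eq_zero_iff_of_nonneg fun i _ => hl i).1 h0.symm
    obtain ⟨x, hx⟩ := hne
    have := hpos x hx
    rw [Finset.sum_eq_zero fun i hi => by rw [hz i hi, zero_mul]] at this
    exact lt_irrefl _ this
  set S := ∑ i, l i with hSdef
  have hxX : ∑ j, (l j / S) • y j ∈ X :=
    hconv.sum_mem (fun i _ => div_nonneg (hl i) hS.le)
      (by rw [← Finset.sum_div]; exact div_self hS.ne') (fun i _ => hy i)
  have hw : ∑ j, l j / S = 1 := by rw [← Finset.sum_div]; exact div_self hS.ne'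
  have hexp : ∀ i, ⟪F (y i), ∑ j, (l j / S) • y j - y i⟫
      = ∑ j, (l j / S) * ⟪F (y i), y j - y i⟫ := by
    intro i
    simp only [inner_sub_right, inner_sum, inner_smul_right, mul_sub, Finset.sum_sub_distrib]
    rw [← Finset.sum_mul, hw, one_mul]
  have hp := hpos _ hxX
  have e1 : ∑ i, l i * ⟪F (y i), ∑ j, (l j / S) • y j - y i⟫
      = ∑ i, ∑ j, (l i * l j / S) * ⟪F (y i), y j - y i⟫ := by
    refine Finset.sum_congr rfl fun i _ => ?_
    rw [hexp, Finset.mul_sum]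
    refine Finset.sum_congr rfl fun j _ => ?_
    ring
  rw [e1] at hp
  have e2 : ∑ i, ∑ j, (l i * l j / S) * ⟪F (y i), y j - y i⟫
      = ∑ i, ∑ j, (l i * l j / S) * ⟪F (y j), y i - y j⟫ := by
    rw [Finset.sum_comm]
    refine Finset.sum_congr rfl fun i _ => Finset.sum_congr rfl fun j _ => ?_
    ring
  have e3 : ∑ i, ∑ j, (l i * l j / S) * ⟪F (y i), y j - y i⟫
      + ∑ i, ∑ j, (l i * l j / S) * ⟪F (y j), y i - y j⟫ ≤ 0 := by
    rw [← Finset.sum_add_distrib]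
    refine Finset.sum_nonpos fun i _ => ?_
    rw [← Finset.sum_add_distrib]
    refine Finset.sum_nonpos fun j _ => ?_
    rw [← mul_add]
    refine mul_nonpos_of_nonneg_of_nonpos (div_nonneg (mul_nonneg (hl i) (hl j)) hS.le) ?_
    have := hmono _ (hy i) _ (hy j)
    simp only [inner_sub_left, inner_sub_right] at this ⊢
    linarith
  linarith

theorem vi_exists {n : ℕ} (X : Set (EuclideanSpace ℝ (Fin n))) (hne : X.Nonempty)
    (hconv : Convex ℝ X) (hcomp : IsCompact X)
    (F : EuclideanSpace ℝ (Fin n) → EuclideanSpace ℝ (Fin n))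
    (hcont : ContinuousOn F X)
    (hmono : ∀ x ∈ X, ∀ y ∈ X, 0 ≤ ⟪F x - F y, x - y⟫) :
    ∃ x ∈ X, ∀ y ∈ X, ⟪F x, x - y⟫ ≤ 0 := by
  classical
  have key : (X ∩ ⋂ y : X, {x | ⟪F y, x - y⟫ ≤ 0}).Nonempty := by
    refine hcomp.inter_iInter_nonempty _ (fun y => ?_) fun u => ?_
    · exact isClosed_le (Continuous.inner continuous_const
        (continuous_id.sub continuous_const)) continuous_const
    · obtain ⟨x, hx, h⟩ := minty_finite X hne hconv hcomp F hmono
        (fun i : u => ((i : X) : EuclideanSpace ℝ (Fin n))) (fun i => i.1.2)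
      refine ⟨x, hx, ?_⟩
      simp only [Set.mem_iInter, Set.mem_setOf_eq]
      exact fun i hi => h ⟨i, hi⟩
  obtain ⟨x, hx, hw⟩ := key
  simp only [Set.mem_iInter, Set.mem_setOf_eq] at hw
  refine ⟨x, hx, fun y hy => ?_⟩
  have hmem : ∀ t ∈ Set.Icc (0 : ℝ) 1, x + t • (y - x) ∈ X := fun t ht =>
    hconv.add_smul_sub_mem hx hy ht
  have hc : ContinuousOn (fun t : ℝ => ⟪F (x + t • (y - x)), x - y⟫) (Set.Icc 0 1) := by
    refine ContinuousOn.inner (𝕜 := ℝ) (hcont.comp ?_ hmem) continuousOn_const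
    fun_prop
  have h0 := (hc 0 (by simp)).mono_left (nhdsWithin_mono 0 Set.Ioc_subset_Icc_self)
  rw [nhdsWithin_Ioc_eq_nhdsGT (zero_lt_one' ℝ)] at h0
  have h0' : Filter.Tendsto (fun t : ℝ => ⟪F (x + t • (y - x)), x - y⟫)
      (nhdsWithin 0 (Set.Ioi 0)) (nhds ⟪F x, x - y⟫) := by simpa using h0
  refine le_of_tendsto h0' ?_
  filter_upwards [Ioc_mem_nhdsGT (zero_lt_one' ℝ)] with t ht
  have h := hw ⟨_, hmem t ⟨ht.1.le, ht.2⟩⟩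
  have e : x - (x + t • (y - x)) = t • (x - y) := by module
  simp only [e, inner_smul_right] at h
  exact nonpos_of_mul_nonpos_right h ht.1

theorem stmt_3 {n : ℕ} (X : Set (EuclideanSpace ℝ (Fin n))) (hne : X.Nonempty)
    (hconv : Convex ℝ X) (hcomp : IsCompact X)
    (F : EuclideanSpace ℝ (Fin n) → EuclideanSpace ℝ (Fin n))
    (hcont : ContinuousOn F X)
    (hmono : ∀ x ∈ X, ∀ y ∈ X, 0 ≤ ⟪F x - F y, x - y⟫)
    (T : Set (ℝ × EuclideanSpace ℝ (Fin n) × EuclideanSpace ℝ (Fin n)))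
    (hTi : T ⊆ calF F X)
    (hTii' : ∀ x ∈ X, ∀ t : ℝ, ⟪F x, x⟫ < t → (t, F x, x) ∈ T) :
    (∀ ε : ℝ, 0 < ε →
      (∃ p ∈ T, ∀ y ∈ X, p.1 - ⟪p.2.1, y⟫ ≤ ε) ∧
      (∀ p ∈ T, (∀ y ∈ X, p.1 - ⟪p.2.1, y⟫ ≤ ε) →
        p.2.2 ∈ X ∧ ∀ y ∈ X, ⟪F y, p.2.2 - y⟫ ≤ ε)) ∧
    ((∀ x ∈ X, (⟪F x, x⟫, F x, x) ∈ T) →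
      ∀ ε : ℝ, 0 ≤ ε →
      (∃ p ∈ T, ∀ y ∈ X, p.1 - ⟪p.2.1, y⟫ ≤ ε) ∧
      (∀ p ∈ T, (∀ y ∈ X, p.1 - ⟪p.2.1, y⟫ ≤ ε) →
        p.2.2 ∈ X ∧ ∀ y ∈ X, ⟪F y, p.2.2 - y⟫ ≤ ε)) := by
  obtain ⟨x, hx, hs⟩ := vi_exists X hne hconv hcomp F hcont hmono
  have hb : ∀ ε : ℝ, ∀ p ∈ T, (∀ y ∈ X, p.1 - ⟪p.2.1, y⟫ ≤ ε) →
        p.2.2 ∈ X ∧ ∀ y ∈ X, ⟪F y, p.2.2 - y⟫ ≤ ε := fun ε p hp h =>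
    ⟨(hTi hp).1, fun y hy => ((hTi hp).2 y hy).trans (h y hy)⟩
  simp only [inner_sub_right] at hs
  refine ⟨fun ε hε => ⟨⟨(⟪F x, x⟫ + ε, F x, x), hTii' x hx _ (by linarith), fun y hy => ?_⟩, hb ε⟩,
    fun hT ε hε => ⟨⟨_, hT x hx, fun y hy => ?_⟩, hb ε⟩⟩
  · have := hs y hy
    dsimp only
    linarith
  · have := hs y hy
    dsimp only
    linarith
end

section
/- Let Y ⊆ ℝ^m be a nonempty convex compact set, K ⊆ ℝ^N a closed convex cone, P ∈ ℝ^{N×m}, p ∈ ℝ^N, Q ∈ ℝ^{N×k}, s ∈ ℝ^N, and let C := {(f,t,u) ∈ ℝ^m × ℝ × ℝ^k : s − (Pf + tp + Qu) ∈ K} be nonempty. Assume that inf_{(f,t,u)∈C} (fᵀy + t) > −∞ for every y ∈ Y. Then sup_{y∈Y} inf_{(f,t,u)∈C} (fᵀy + t) = inf_{(f,t,u)∈C} ( max_{y∈Y} fᵀy + t ). -/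
open Matrix

theorem stmt_6 {m k N : ℕ}
    (Y : Set (Fin m → ℝ)) (hYne : Y.Nonempty) (hYconv : Convex ℝ Y)
    (hYcomp : IsCompact Y)
    (K : Set (Fin N → ℝ)) (hKclosed : IsClosed K) (hKconv : Convex ℝ K)
    (hKcone : ∀ a : ℝ, 0 ≤ a → ∀ v ∈ K, a • v ∈ K)
    (P : Matrix (Fin N) (Fin m) ℝ) (p : Fin N → ℝ)
    (Q : Matrix (Fin N) (Fin k) ℝ) (s : Fin N → ℝ)
    (C : Set ((Fin m → ℝ) × ℝ × (Fin k → ℝ)))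
    (hC : C = {c | s - (P.mulVec c.1 + c.2.1 • p + Q.mulVec c.2.2) ∈ K})
    (hCne : C.Nonempty)
    (hbd : ∀ y ∈ Y, BddBelow {v : ℝ | ∃ c ∈ C, v = c.1 ⬝ᵥ y + c.2.1}) :
    sSup {v : ℝ | ∃ y ∈ Y, v = sInf {w : ℝ | ∃ c ∈ C, w = c.1 ⬝ᵥ y + c.2.1}} =
      sInf {w : ℝ | ∃ c ∈ C,
        w = sSup {v : ℝ | ∃ y ∈ Y, v = c.1 ⬝ᵥ y} + c.2.1} := by
  subst hC
  set C : Set ((Fin m → ℝ) × ℝ × (Fin k → ℝ)) :=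
    {c | s - (P.mulVec c.1 + c.2.1 • p + Q.mulVec c.2.2) ∈ K} with hCdef
  have hCconv : Convex ℝ C := by
    intro c hc d hd a b ha hb hab
    have h := hKconv hc hd ha hb hab
    have e : s - (P.mulVec (a • c + b • d).1 + (a • c + b • d).2.1 • p
        + Q.mulVec (a • c + b • d).2.2) =
      a • (s - (P.mulVec c.1 + c.2.1 • p + Q.mulVec c.2.2)) +
      b • (s - (P.mulVec d.1 + d.2.1 • p + Q.mulVec d.2.2)) := by
      have hs : s = a • s + b • s := by rw [← add_smul, hab, one_smul]
      simp only [Prod.fst_add, Prod.snd_add, Prod.smul_fst, Prod.smul_snd, Matrix.mulVec_add,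
        Matrix.mulVec_smul]
      nth_rewrite 1 [hs]
      module
    change _ ∈ K
    rw [e]
    exact h
  let g : (Fin m → ℝ) → ((Fin m → ℝ) × ℝ × (Fin k → ℝ)) → ℝ :=
    fun y c => -(c.1 ⬝ᵥ y + c.2.1)
  have hcont1 : ∀ c, Continuous (fun y => g y c) := by
    intro c
    simp only [g, dotProduct]
    fun_prop
  have hcont2 : ∀ y, Continuous (fun c => g y c) := by
    intro y
    simp only [g, dotProduct]
    fun_prop
  have haff1 : ∀ c y z (a b : ℝ), a + b = 1 → g (a • y + b • z) c = a * g y c + b * g z c := by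
    intro c y z a b hab
    simp only [g, dotProduct_add, dotProduct_smul, smul_eq_mul]
    linear_combination c.2.1 * hab
  have haff2 : ∀ y c d (a b : ℝ), g y (a • c + b • d) = a * g y c + b * g y d := by
    intro y c d a b
    simp only [g, Prod.fst_add, Prod.snd_add, Prod.smul_fst, Prod.smul_snd, add_dotProduct,
      smul_dotProduct, smul_eq_mul]
    ring
  have hq1 : ∀ c ∈ C, QuasiconvexOn ℝ Y (fun y => g y c) := fun c _ =>
    ConvexOn.quasiconvexOn ⟨hYconv, fun y _ z _ a b _ _ hab => (haff1 c y z a b hab).le⟩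
  have hq2 : ∀ y ∈ Y, QuasiconcaveOn ℝ C (fun c => g y c) := fun y _ =>
    ConcaveOn.quasiconcaveOn ⟨hCconv, fun c _ d _ a b _ _ _ => (haff2 y c d a b).ge⟩
  -- bounds
  have hlin : ∀ f : Fin m → ℝ, IsLUB {v : ℝ | ∃ y ∈ Y, v = f ⬝ᵥ y}
      (sSup {v : ℝ | ∃ y ∈ Y, v = f ⬝ᵥ y}) := by
    intro f
    have hc : Continuous (fun y : Fin m → ℝ => f ⬝ᵥ y) := by
      simp only [dotProduct]
      fun_prop
    obtain ⟨B, hB⟩ := hYcomp.bddAbove_image hc.continuousOn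
    apply isLUB_csSup
    · obtain ⟨y, hy⟩ := hYne
      exact ⟨_, y, hy, rfl⟩
    · refine ⟨B, ?_⟩
      rintro _ ⟨y, hy, rfl⟩
      exact hB ⟨y, hy, rfl⟩
  have hinf : ∀ y ∈ Y, IsGLB {w : ℝ | ∃ c ∈ C, w = c.1 ⬝ᵥ y + c.2.1}
      (sInf {w : ℝ | ∃ c ∈ C, w = c.1 ⬝ᵥ y + c.2.1}) := by
    intro y hy
    apply isGLB_csInf _ (hbd y hy)
    obtain ⟨c, hc⟩ := hCne
    exact ⟨_, c, hc, rfl⟩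
  have hL : IsLUB {v : ℝ | ∃ y ∈ Y, v = sInf {w : ℝ | ∃ c ∈ C, w = c.1 ⬝ᵥ y + c.2.1}}
      (sSup {v : ℝ | ∃ y ∈ Y, v = sInf {w : ℝ | ∃ c ∈ C, w = c.1 ⬝ᵥ y + c.2.1}}) := by
    apply isLUB_csSup
    · obtain ⟨y, hy⟩ := hYne
      exact ⟨_, y, hy, rfl⟩
    · obtain ⟨c, hc⟩ := hCne
      refine ⟨sSup {v : ℝ | ∃ y ∈ Y, v = c.1 ⬝ᵥ y} + c.2.1, ?_⟩
      rintro _ ⟨y, hy, rfl⟩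
      have h1 := (hinf y hy).1 ⟨c, hc, rfl⟩
      have h2 := (hlin c.1).1 ⟨y, hy, rfl⟩
      linarith
  have hR : IsGLB {w : ℝ | ∃ c ∈ C, w = sSup {v : ℝ | ∃ y ∈ Y, v = c.1 ⬝ᵥ y} + c.2.1}
      (sInf {w : ℝ | ∃ c ∈ C, w = sSup {v : ℝ | ∃ y ∈ Y, v = c.1 ⬝ᵥ y} + c.2.1}) := by
    apply isGLB_csInf
    · obtain ⟨c, hc⟩ := hCne
      exact ⟨_, c, hc, rfl⟩
    · obtain ⟨y, hy⟩ := hYne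
      refine ⟨sInf {w : ℝ | ∃ c ∈ C, w = c.1 ⬝ᵥ y + c.2.1}, ?_⟩
      rintro _ ⟨c, hc, rfl⟩
      have h1 := (hinf y hy).1 ⟨c, hc, rfl⟩
      have h2 := (hlin c.1).1 ⟨y, hy, rfl⟩
      linarith
  have key := Sion.minimax (X := Y) (Y := C) (f := g) hYne hYcomp
    (fun c _ => (hcont1 c).lowerSemicontinuous.lowerSemicontinuousOn _) hq1 hCconv
    (fun y _ => (hcont2 y).upperSemicontinuous.upperSemicontinuousOn _) hq2 hYconv
    (fun y => - sInf {w : ℝ | ∃ c ∈ C, w = c.1 ⬝ᵥ y + c.2.1}) ?_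
    (- sSup {v : ℝ | ∃ y ∈ Y, v = sInf {w : ℝ | ∃ c ∈ C, w = c.1 ⬝ᵥ y + c.2.1}}) ?_
    (fun c => - (sSup {v : ℝ | ∃ y ∈ Y, v = c.1 ⬝ᵥ y} + c.2.1)) ?_
    (- sInf {w : ℝ | ∃ c ∈ C, w = sSup {v : ℝ | ∃ y ∈ Y, v = c.1 ⬝ᵥ y} + c.2.1}) ?_
  · exact neg_injective key
  · intro y hy
    constructor
    · rintro _ ⟨c, hc, rfl⟩
      exact neg_le_neg ((hinf y hy).1 ⟨c, hc, rfl⟩)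
    · intro b hb
      apply neg_le.mp
      apply (hinf y hy).2
      rintro _ ⟨c, hc, rfl⟩
      exact neg_le.mp (hb ⟨c, hc, rfl⟩)
  · constructor
    · rintro _ ⟨y, hy, rfl⟩
      exact neg_le_neg (hL.1 ⟨y, hy, rfl⟩)
    · intro b hb
      apply le_neg.mp
      apply hL.2
      rintro _ ⟨y, hy, rfl⟩
      exact le_neg.mp (hb ⟨y, hy, rfl⟩)
  · intro c hc
    constructor
    · rintro _ ⟨y, hy, rfl⟩
      exact neg_le_neg (add_le_add_left ((hlin c.1).1 ⟨y, hy, rfl⟩) _)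
    · intro b hb
      have : sSup {v : ℝ | ∃ y ∈ Y, v = c.1 ⬝ᵥ y} ≤ -b - c.2.1 := by
        apply (hlin c.1).2
        rintro _ ⟨y, hy, rfl⟩
        have h : b ≤ -(c.1 ⬝ᵥ y + c.2.1) := hb ⟨y, hy, rfl⟩
        linarith
      change b ≤ -(_ + _)
      linarith
  · constructor
    · rintro _ ⟨c, hc, rfl⟩
      exact neg_le_neg (hR.1 ⟨c, hc, rfl⟩)
    · intro b hb
      apply neg_le.mp
      apply hR.2
      rintro _ ⟨c, hc, rfl⟩
      exact neg_le.mp (hb ⟨c, hc, rfl⟩)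
end

section
/- Let A ∈ ℝ^{n×n}, a ∈ ℝⁿ, F(x) := Ax + a, and Ā := (A + Aᵀ)/2. Then: (a) F is monotone on ℝⁿ if and only if Ā is positive semidefinite. Assume Ā is positive semidefinite. Then: (b) whenever t ∈ ℝ, g ∈ ℝⁿ, x ∈ ℝⁿ satisfy t ≥ xᵀĀx + aᵀx and g = Ax + a, one has (t,g,x) ∈ 𝓕[F,ℝⁿ], i.e., t − ⟨g,y⟩ ≥ ⟨Ay + a, x − y⟩ for all y ∈ ℝⁿ; and (c) for every x ∈ ℝⁿ, the triple t = ⟨F(x), x⟩, g = F(x), x satisfies t ≥ xᵀĀx + aᵀx and g = Ax + a. -/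
open Matrix

theorem stmt_8 {n : ℕ} (A : Matrix (Fin n) (Fin n) ℝ) (a : Fin n → ℝ)
    (F : (Fin n → ℝ) → (Fin n → ℝ)) (hF : ∀ x, F x = A.mulVec x + a)
    (Abar : Matrix (Fin n) (Fin n) ℝ) (hAbar : Abar = (1 / 2 : ℝ) • (A + Aᵀ)) :
    -- (a) monotonicity of F on ℝⁿ is equivalent to Ā ⪰ 0
    ((∀ x y : Fin n → ℝ, 0 ≤ (F x - F y) ⬝ᵥ (x - y)) ↔ Abar.PosSemidef) ∧
    (Abar.PosSemidef →
      -- (b) any solution of the conic constraint lies in 𝓕[F,ℝⁿ]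
      ((∀ (t : ℝ) (g x : Fin n → ℝ),
          x ⬝ᵥ Abar.mulVec x + a ⬝ᵥ x ≤ t → g = A.mulVec x + a →
          ∀ y : Fin n → ℝ, (A.mulVec y + a) ⬝ᵥ (x - y) ≤ t - g ⬝ᵥ y) ∧
       -- (c) the canonical triple solves the constraint
       (∀ x : Fin n → ℝ,
          x ⬝ᵥ Abar.mulVec x + a ⬝ᵥ x ≤ (F x) ⬝ᵥ x ∧ F x = A.mulVec x + a))) := by
  have key : ∀ x : Fin n → ℝ, x ⬝ᵥ Abar.mulVec x = (A.mulVec x) ⬝ᵥ x := by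
    intro x
    have h2 : x ⬝ᵥ Aᵀ.mulVec x = (A.mulVec x) ⬝ᵥ x := by
      rw [Matrix.mulVec_transpose, dotProduct_comm, ← Matrix.dotProduct_mulVec, dotProduct_comm]
    have h3 : x ⬝ᵥ A.mulVec x = (A.mulVec x) ⬝ᵥ x := dotProduct_comm _ _
    rw [hAbar, Matrix.smul_mulVec, Matrix.add_mulVec, dotProduct_smul, dotProduct_add, h2, h3,
      smul_eq_mul]
    ring
  have hherm : Abar.IsHermitian := by
    rw [hAbar, Matrix.IsHermitian, Matrix.conjTranspose_eq_transpose_of_trivial]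
    simp [add_comm]
  have hpsd : Abar.PosSemidef ↔ ∀ x : Fin n → ℝ, 0 ≤ (A.mulVec x) ⬝ᵥ x := by
    rw [Matrix.posSemidef_iff_dotProduct_mulVec]
    constructor
    · intro h x
      have := h.2 x
      rwa [star_trivial, key] at this
    · intro h
      refine ⟨hherm, fun x => ?_⟩
      rw [star_trivial, key]
      exact h x
  have hdiff : ∀ x y, F x - F y = A.mulVec (x - y) := by
    intro x y
    rw [hF, hF, Matrix.mulVec_sub]
    abel
  refine ⟨?_, fun hp => ⟨?_, ?_⟩⟩
  · rw [hpsd]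
    constructor
    · intro h x
      have := h x 0
      rwa [hdiff, sub_zero] at this
    · intro h x y
      rw [hdiff]
      exact h _
  · intro t g x ht hg y
    have h := hpsd.1 hp (x - y)
    rw [key] at ht
    subst hg
    simp only [Matrix.mulVec_sub, sub_dotProduct, dotProduct_sub, add_dotProduct] at *
    linarith
  · intro x
    refine ⟨?_, hF x⟩
    rw [key, hF, add_dotProduct]
end

section
/- Let X ⊆ ℝⁿ be a nonempty convex compact set and f : ℝⁿ → ℝ be convex on X and differentiable at every point of X, with gradient ∇f. Define f_*(g) := sup_{x∈X} (⟨g,x⟩ − f(x)) and Z := {(t,g,x) ∈ ℝ × ℝⁿ × ℝⁿ : x ∈ X and f(x) + f_*(g) ≤ t}. Then: (a) Z ⊆ 𝓕[∇f, X]; and (b) for every x ∈ X, the triple (⟨∇f(x), x⟩, ∇f(x), x) belongs to Z, i.e., f_*(∇f(x)) = ⟨∇f(x), x⟩ − f(x). -/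
open scoped RealInnerProductSpace

theorem grad_ineq {n : ℕ} (X : Set (EuclideanSpace ℝ (Fin n)))
    (f : EuclideanSpace ℝ (Fin n) → ℝ) (hconvf : ConvexOn ℝ X f)
    {x y : EuclideanSpace ℝ (Fin n)} (hx : x ∈ X) (hy : y ∈ X)
    (hd : DifferentiableAt ℝ f y) : f y + ⟪gradient f y, x - y⟫ ≤ f x := by
  have hc : ConvexOn ℝ ((AffineMap.lineMap y x : ℝ →ᵃ[ℝ] EuclideanSpace ℝ (Fin n)) ⁻¹' X)
      (f ∘ (AffineMap.lineMap y x : ℝ →ᵃ[ℝ] EuclideanSpace ℝ (Fin n))) :=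
    hconvf.comp_affineMap _
  have hg : HasDerivAt (f ∘ (AffineMap.lineMap y x : ℝ →ᵃ[ℝ] EuclideanSpace ℝ (Fin n)))
      ⟪gradient f y, x - y⟫ 0 := by
    have h1 : HasFDerivAt f (InnerProductSpace.toDual ℝ _ (gradient f y))
        ((AffineMap.lineMap y x : ℝ →ᵃ[ℝ] EuclideanSpace ℝ (Fin n)) 0) := by
      rw [AffineMap.lineMap_apply_zero]
      exact hd.hasGradientAt.hasFDerivAt
    have h2 : HasDerivAt (AffineMap.lineMap y x : ℝ →ᵃ[ℝ] EuclideanSpace ℝ (Fin n)) (x - y) 0 :=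
      AffineMap.hasDerivAt_lineMap
    have h3 := h1.comp_hasDerivAt (0 : ℝ) h2
    simpa using h3
  have h := hc.le_slope_of_hasDerivAt (x := 0) (y := 1) (by simpa using hy) (by simpa using hx)
    one_pos hg
  simp only [slope_def_field, Function.comp_apply, AffineMap.lineMap_apply_zero,
    AffineMap.lineMap_apply_one, sub_zero, div_one] at h
  linarith

theorem stmt_9 {n : ℕ} (X : Set (EuclideanSpace ℝ (Fin n))) (hne : X.Nonempty)
    (hconv : Convex ℝ X) (hcomp : IsCompact X)
    (f : EuclideanSpace ℝ (Fin n) → ℝ)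
    (hconvf : ConvexOn ℝ X f)
    (hdiff : ∀ x ∈ X, DifferentiableAt ℝ f x)
    (fstar : EuclideanSpace ℝ (Fin n) → ℝ)
    (hfstar : ∀ g : EuclideanSpace ℝ (Fin n),
      fstar g = sSup {v : ℝ | ∃ x ∈ X, v = ⟪g, x⟫ - f x})
    (Z : Set (ℝ × EuclideanSpace ℝ (Fin n) × EuclideanSpace ℝ (Fin n)))
    (hZ : Z = {p | p.2.2 ∈ X ∧ f p.2.2 + fstar p.2.1 ≤ p.1}) :
    -- (a) Z ⊆ 𝓕[∇f, X]
    (∀ p ∈ Z, p.2.2 ∈ X ∧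
      ∀ y ∈ X, ⟪gradient f y, p.2.2 - y⟫ ≤ p.1 - ⟪p.2.1, y⟫) ∧
    -- (b) the canonical triple belongs to Z
    (∀ x ∈ X, fstar (gradient f x) = ⟪gradient f x, x⟫ - f x ∧
      (⟪gradient f x, x⟫, gradient f x, x) ∈ Z) := by
  have hcont : ContinuousOn f X := fun x hx => (hdiff x hx).continuousAt.continuousWithinAt
  have hbdd : ∀ g : EuclideanSpace ℝ (Fin n),
      BddAbove {v : ℝ | ∃ x ∈ X, v = ⟪g, x⟫ - f x} := by
    intro g
    have hc : ContinuousOn (fun x => ⟪g, x⟫ - f x) X :=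
      (Continuous.continuousOn (by fun_prop)).sub hcont
    refine (hcomp.bddAbove_image hc).mono ?_
    rintro v ⟨x, hx, rfl⟩
    exact ⟨x, hx, rfl⟩
  have hstar : ∀ x ∈ X, fstar (gradient f x) = ⟪gradient f x, x⟫ - f x := by
    intro x hx
    rw [hfstar]
    refine IsGreatest.csSup_eq ⟨⟨x, hx, rfl⟩, ?_⟩
    rintro v ⟨y, hy, rfl⟩
    have h := grad_ineq X f hconvf hy hx (hdiff x hx)
    rw [inner_sub_right] at h
    linarith
  subst hZ
  refine ⟨?_, ?_⟩
  · rintro ⟨t, g, x⟩ ⟨hx, ht⟩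
    refine ⟨hx, fun y hy => ?_⟩
    have h := grad_ineq X f hconvf hx hy (hdiff y hy)
    have h2 : ⟪g, y⟫ - f y ≤ fstar g := by
      rw [hfstar]
      exact le_csSup (hbdd g) ⟨y, hy, rfl⟩
    dsimp only at *
    linarith
  · intro x hx
    refine ⟨hstar x hx, hx, ?_⟩
    dsimp only
    rw [hstar x hx]
    linarith
end

section
/- Let U ⊆ ℝ^p and V ⊆ ℝ^q be nonempty convex compact sets and ψ : U × V → ℝ be continuously differentiable, convex in u for each fixed v ∈ V, and concave in v for each fixed u ∈ U. Let X := U × V and F(u,v) := (∇_u ψ(u,v), −∇_v ψ(u,v)). Define Z := {(t, (h,e), (u,v)) ∈ ℝ × (ℝ^p × ℝ^q) × (ℝ^p × ℝ^q) : u ∈ U, v ∈ V, and there exist r, s ∈ ℝ with r > max_{ζ∈V} (⟨ζ,e⟩ + ψ(u,ζ)), s > max_{ω∈U} (⟨ω,h⟩ − ψ(ω,v)), and t ≥ r + s}. Then: (a) Z ⊆ 𝓕[F, X]; and (b) if x = (u,v) ∈ X, g = F(x), and t > ⟨x, F(x)⟩, then (t, g, x) ∈ Z. -/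
open scoped RealInnerProductSpace

lemma convex_gradient_ineq {n : ℕ} {S : Set (EuclideanSpace ℝ (Fin n))}
    {f : EuclideanSpace ℝ (Fin n) → ℝ} (hf : ConvexOn ℝ S f)
    {x y : EuclideanSpace ℝ (Fin n)} (hx : x ∈ S) (hy : y ∈ S)
    (hd : DifferentiableAt ℝ f x) : ⟪gradient f x, y - x⟫ ≤ f y - f x := by
  have hg : ConvexOn ℝ (AffineMap.lineMap x y ⁻¹' S : Set ℝ)
      (f ∘ (AffineMap.lineMap x y : ℝ →ᵃ[ℝ] EuclideanSpace ℝ (Fin n))) :=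
    hf.comp_affineMap _
  have h1 : HasFDerivAt f (fderiv ℝ f x) (AffineMap.lineMap x y (0 : ℝ)) := by
    simpa using hd.hasFDerivAt
  have h2 : HasDerivAt (f ∘ (AffineMap.lineMap x y : ℝ →ᵃ[ℝ] EuclideanSpace ℝ (Fin n)))
      (fderiv ℝ f x (y - x)) 0 :=
    h1.comp_hasDerivAt (0 : ℝ) AffineMap.hasDerivAt_lineMap
  have h3 := hg.le_slope_of_hasDerivAt (x := 0) (y := 1) (by simpa using hx)
    (by simpa using hy) one_pos h2
  have h4 : ⟪gradient f x, y - x⟫ = fderiv ℝ f x (y - x) := by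
    simp [gradient]
  rw [h4]
  simpa [slope_def_field] using h3

lemma concave_gradient_ineq {n : ℕ} {S : Set (EuclideanSpace ℝ (Fin n))}
    {f : EuclideanSpace ℝ (Fin n) → ℝ} (hf : ConcaveOn ℝ S f)
    {x y : EuclideanSpace ℝ (Fin n)} (hx : x ∈ S) (hy : y ∈ S)
    (hd : DifferentiableAt ℝ f x) : f y - f x ≤ ⟪gradient f x, y - x⟫ := by
  have h := convex_gradient_ineq hf.neg hx hy hd.neg
  have e : gradient (-f) x = - gradient f x := by
    simp [gradient, fderiv_neg]
  rw [e, inner_neg_left] at h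
  simp only [Pi.neg_apply] at h
  linarith

theorem stmt_10 {p q : ℕ}
    (U : Set (EuclideanSpace ℝ (Fin p))) (V : Set (EuclideanSpace ℝ (Fin q)))
    (hUne : U.Nonempty) (hVne : V.Nonempty)
    (hUconv : Convex ℝ U) (hVconv : Convex ℝ V)
    (hUcomp : IsCompact U) (hVcomp : IsCompact V)
    (ψ : EuclideanSpace ℝ (Fin p) → EuclideanSpace ℝ (Fin q) → ℝ)
    (hsmooth : ContDiff ℝ 1
      (fun w : EuclideanSpace ℝ (Fin p) × EuclideanSpace ℝ (Fin q) => ψ w.1 w.2))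
    (hconv : ∀ v ∈ V, ConvexOn ℝ U (fun u => ψ u v))
    (hconc : ∀ u ∈ U, ConcaveOn ℝ V (fun v => ψ u v))
    (Z : Set (ℝ × (EuclideanSpace ℝ (Fin p) × EuclideanSpace ℝ (Fin q)) ×
      (EuclideanSpace ℝ (Fin p) × EuclideanSpace ℝ (Fin q))))
    (hZ : Z = {z | z.2.2.1 ∈ U ∧ z.2.2.2 ∈ V ∧ ∃ r s : ℝ,
      (∀ ζ ∈ V, ⟪ζ, z.2.1.2⟫ + ψ z.2.2.1 ζ < r) ∧
      (∀ ω ∈ U, ⟪ω, z.2.1.1⟫ - ψ ω z.2.2.2 < s) ∧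
      r + s ≤ z.1}) :
    -- (a) Z ⊆ 𝓕[F, U × V], where F(u,v) = (∇_u ψ(u,v), −∇_v ψ(u,v))
    (∀ z ∈ Z, (z.2.2.1 ∈ U ∧ z.2.2.2 ∈ V) ∧
      ∀ w ∈ U, ∀ ζ ∈ V,
        ⟪gradient (fun u' => ψ u' ζ) w, z.2.2.1 - w⟫ +
          ⟪-gradient (fun v' => ψ w v') ζ, z.2.2.2 - ζ⟫ ≤
          z.1 - (⟪z.2.1.1, w⟫ + ⟪z.2.1.2, ζ⟫)) ∧
    -- (b) x ∈ U × V, g = F(x), t > ⟨x, F(x)⟩ implies (t,g,x) ∈ Z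
    (∀ u ∈ U, ∀ v ∈ V, ∀ t : ℝ,
      ⟪u, gradient (fun u' => ψ u' v) u⟫ +
        ⟪v, -gradient (fun v' => ψ u v') v⟫ < t →
      (t, (gradient (fun u' => ψ u' v) u, -gradient (fun v' => ψ u v') v),
        (u, v)) ∈ Z) := by
  have hD := hsmooth.differentiable one_ne_zero
  have hDu : ∀ u v, DifferentiableAt ℝ (fun u' => ψ u' v) u := fun u v =>
    (hD (u, v)).comp (f := fun u' => (u', v)) u
      (differentiableAt_id.prodMk (differentiableAt_const v))
  have hDv : ∀ u v, DifferentiableAt ℝ (fun v' => ψ u v') v := fun u v =>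
    (hD (u, v)).comp (f := fun v' => (u, v')) v
      ((differentiableAt_const u).prodMk differentiableAt_id)
  subst hZ
  constructor
  · rintro ⟨t, ⟨h, e⟩, ⟨u, v⟩⟩ ⟨hu, hv, r, s, hr, hs, hrs⟩
    refine ⟨⟨hu, hv⟩, fun w hw ζ hζ => ?_⟩
    have a := convex_gradient_ineq (hconv ζ hζ) hw hu (hDu w ζ)
    have b := concave_gradient_ineq (hconc w hw) hζ hv (hDv w ζ)
    have c := hr ζ hζ
    have d := hs w hw
    dsimp only at *
    rw [inner_neg_left, real_inner_comm w h, real_inner_comm ζ e]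
    linarith
  · intro u hu v hv t ht
    obtain ⟨ε, hε, hεt⟩ : ∃ ε : ℝ, 0 < ε ∧ ⟪u, gradient (fun u' => ψ u' v) u⟫ +
        ⟪v, -gradient (fun v' => ψ u v') v⟫ + 2 * ε = t :=
      ⟨(t - (⟪u, gradient (fun u' => ψ u' v) u⟫ +
        ⟪v, -gradient (fun v' => ψ u v') v⟫)) / 2, by linarith, by ring⟩
    refine ⟨hu, hv, ⟪v, -gradient (fun v' => ψ u v') v⟫ + ψ u v + ε,
      ⟪u, gradient (fun u' => ψ u' v) u⟫ - ψ u v + ε, fun ζ hζ => ?_, fun ω hω => ?_, ?_⟩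
    · have b := concave_gradient_ineq (hconc u hu) hv hζ (hDv u v)
      rw [real_inner_comm, inner_sub_left] at b
      dsimp only at *
      simp only [inner_neg_right]
      linarith
    · have b := convex_gradient_ineq (hconv v hv) hu hω (hDu u v)
      rw [real_inner_comm, inner_sub_left] at b
      dsimp only at *
      linarith
    · dsimp only
      linarith
end

section
/- For k = 1,…,K let X_k ⊆ ℝ^{n_k} be nonempty sets, F_k : X_k → ℝ^{n_k} be maps, and T_k ⊆ ℝ × ℝ^{n_k} × ℝ^{n_k} represent (F_k, X_k), i.e., T_k ⊆ 𝓕[F_k, X_k] and (⟨F_k(x), x⟩, F_k(x), x) ∈ T_k for all x ∈ X_k. Let X := X_1 × … × X_K ⊆ ℝ^{n_1} × … × ℝ^{n_K} and F(x_1,…,x_K) := (F_1(x_1), …, F_K(x_K)). Then the set T := {(t, (g_1,…,g_K), (x_1,…,x_K)) : there exist t_1,…,t_K with (t_k, g_k, x_k) ∈ T_k for all k and t = Σ_k t_k} represents (F, X): T ⊆ 𝓕[F, X] and (⟨F(x), x⟩, F(x), x) ∈ T for all x ∈ X. -/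
open scoped RealInnerProductSpace

theorem stmt_13 {K : ℕ} (n : Fin K → ℕ)
    (X : ∀ k, Set (EuclideanSpace ℝ (Fin (n k))))
    (hne : ∀ k, (X k).Nonempty)
    (F : ∀ k, EuclideanSpace ℝ (Fin (n k)) → EuclideanSpace ℝ (Fin (n k)))
    (T : ∀ k, Set (ℝ × EuclideanSpace ℝ (Fin (n k)) × EuclideanSpace ℝ (Fin (n k))))
    -- each T_k is contained in 𝓕[F_k, X_k] ...
    (hT1 : ∀ k, ∀ p ∈ T k, p.2.2 ∈ X k ∧
      ∀ y ∈ X k, ⟪F k y, p.2.2 - y⟫ ≤ p.1 - ⟪p.2.1, y⟫)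
    -- ... and contains the canonical triples
    (hT2 : ∀ k, ∀ x ∈ X k, (⟪F k x, x⟫, F k x, x) ∈ T k)
    (Tprod : Set (ℝ × (∀ k, EuclideanSpace ℝ (Fin (n k))) ×
      (∀ k, EuclideanSpace ℝ (Fin (n k)))))
    (hTprod : Tprod = {p | ∃ ts : Fin K → ℝ,
      (∀ k, (ts k, p.2.1 k, p.2.2 k) ∈ T k) ∧ p.1 = ∑ k, ts k}) :
    -- T ⊆ 𝓕[F, X] for the direct product data (inner product = sum of blockwise ones)
    (∀ p ∈ Tprod, (∀ k, p.2.2 k ∈ X k) ∧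
      ∀ y : ∀ k, EuclideanSpace ℝ (Fin (n k)), (∀ k, y k ∈ X k) →
        ∑ k, ⟪F k (y k), p.2.2 k - y k⟫ ≤ p.1 - ∑ k, ⟪p.2.1 k, y k⟫) ∧
    -- and T contains the canonical triples of the product field
    (∀ x : ∀ k, EuclideanSpace ℝ (Fin (n k)), (∀ k, x k ∈ X k) →
      (∑ k, ⟪F k (x k), x k⟫, fun k => F k (x k), x) ∈ Tprod) := by
  subst hTprod
  refine ⟨?_, ?_⟩
  · rintro p ⟨ts, hts, hp⟩
    refine ⟨fun k => (hT1 k _ (hts k)).1, fun y hy => ?_⟩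
    rw [hp, ← Finset.sum_sub_distrib]
    exact Finset.sum_le_sum fun k _ => (hT1 k _ (hts k)).2 (y k) (hy k)
  · intro x hx
    exact ⟨fun k => ⟪F k (x k), x k⟫, fun k => hT2 k (x k) (hx k), rfl⟩
end

section
/- Let X ⊆ ℝⁿ be a nonempty set, F : X → ℝⁿ a map, and T ⊆ ℝ × ℝⁿ × ℝⁿ represent (F,X), i.e., T ⊆ 𝓕[F,X] and (⟨F(x),x⟩, F(x), x) ∈ T for all x ∈ X. Let A : ℝ^l → ℝⁿ be a linear map, a ∈ ℝⁿ, Ξ := {ξ ∈ ℝ^l : Aξ + a ∈ X}, and Φ(ξ) := Aᵀ F(Aξ + a) for ξ ∈ Ξ, where Aᵀ is the adjoint of A. Then: (a) Φ is monotone on Ξ whenever F is monotone on X; and (b) the set T' := {(τ, γ, ξ) ∈ ℝ × ℝ^l × ℝ^l : there exist t ∈ ℝ, g ∈ ℝⁿ with (t, g, Aξ + a) ∈ T, τ = t − ⟨g, a⟩, and γ = Aᵀg} represents (Φ, Ξ): T' ⊆ 𝓕[Φ, Ξ] and (⟨Φ(ξ), ξ⟩, Φ(ξ), ξ) ∈ T'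 for all ξ ∈ Ξ. -/
open Matrix

theorem stmt_15 {n l : ℕ} (X : Set (Fin n → ℝ)) (hne : X.Nonempty)
    (F : (Fin n → ℝ) → (Fin n → ℝ))
    (T : Set (ℝ × (Fin n → ℝ) × (Fin n → ℝ)))
    -- T ⊆ 𝓕[F,X] (with the standard inner product ⬝ᵥ on ℝⁿ) ...
    (hT1 : ∀ p ∈ T, p.2.2 ∈ X ∧
      ∀ y ∈ X, (F y) ⬝ᵥ (p.2.2 - y) ≤ p.1 - p.2.1 ⬝ᵥ y)
    -- ... and contains the canonical triples
    (hT2 : ∀ x ∈ X, ((F x) ⬝ᵥ x, F x, x) ∈ T)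
    (A : Matrix (Fin n) (Fin l) ℝ) (a : Fin n → ℝ)
    (Ξ : Set (Fin l → ℝ)) (hΞ : Ξ = {ξ | A.mulVec ξ + a ∈ X})
    (Φ : (Fin l → ℝ) → (Fin l → ℝ))
    (hΦ : ∀ ξ, Φ ξ = Aᵀ.mulVec (F (A.mulVec ξ + a)))
    (T' : Set (ℝ × (Fin l → ℝ) × (Fin l → ℝ)))
    (hT' : T' = {p | ∃ (t : ℝ) (g : Fin n → ℝ),
      (t, g, A.mulVec p.2.2 + a) ∈ T ∧ p.1 = t - g ⬝ᵥ a ∧ p.2.1 = Aᵀ.mulVec g}) :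
    -- (a) Φ is monotone on Ξ whenever F is monotone on X
    ((∀ x ∈ X, ∀ y ∈ X, 0 ≤ (F x - F y) ⬝ᵥ (x - y)) →
      ∀ ξ ∈ Ξ, ∀ η ∈ Ξ, 0 ≤ (Φ ξ - Φ η) ⬝ᵥ (ξ - η)) ∧
    -- (b) T' ⊆ 𝓕[Φ, Ξ] and T' contains the canonical triples
    (∀ p ∈ T', p.2.2 ∈ Ξ ∧
      ∀ η ∈ Ξ, (Φ η) ⬝ᵥ (p.2.2 - η) ≤ p.1 - p.2.1 ⬝ᵥ η) ∧
    (∀ ξ ∈ Ξ, ((Φ ξ) ⬝ᵥ ξ, Φ ξ, ξ) ∈ T') := by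
  have key : ∀ (g : Fin n → ℝ) (v : Fin l → ℝ), (Aᵀ.mulVec g) ⬝ᵥ v = g ⬝ᵥ (A.mulVec v) := by
    intro g v
    rw [Matrix.mulVec_transpose, Matrix.dotProduct_mulVec]
  subst hΞ hT'
  refine ⟨?_, ?_, ?_⟩
  · intro hF ξ hξ η hη
    have h := hF _ hξ _ hη
    rw [hΦ, hΦ, ← Matrix.mulVec_sub, key, Matrix.mulVec_sub]
    rwa [add_sub_add_right_eq_sub] at h
  · rintro ⟨τ, γ, ξ⟩ ⟨t, g, hT, h1, h2⟩
    obtain ⟨hX, h⟩ := hT1 _ hT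
    refine ⟨hX, ?_⟩
    intro η hη
    have h3 := h _ hη
    dsimp only at h1 h2 h3 ⊢
    rw [hΦ, h1, h2, key, key, Matrix.mulVec_sub]
    rw [add_sub_add_right_eq_sub, dotProduct_add] at h3
    linarith
  · intro ξ hξ
    refine ⟨_, _, hT2 _ hξ, ?_, hΦ ξ⟩
    dsimp only
    rw [hΦ, key, dotProduct_add]
    ring
end

section
/- For all real numbers u ≥ 0 and v ≥ 0, −u/(u+v+1) equals the minimum of f·v + t over all (f, t, s) ∈ ℝ³ satisfying 0 ≤ f ≤ 1, 0 ≤ s, s² ≤ u·f, s + 1/(u+1) ≤ 1, t − f ≥ (1−s)² − 1, and t ≤ 1; in particular, the minimum is attained. -/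
theorem stmt_16 (u v : ℝ) (hu : 0 ≤ u) (hv : 0 ≤ v) :
    IsLeast {z : ℝ | ∃ f t s : ℝ, z = f * v + t ∧
      0 ≤ f ∧ f ≤ 1 ∧ 0 ≤ s ∧ s ^ 2 ≤ u * f ∧ s + 1 / (u + 1) ≤ 1 ∧
      (1 - s) ^ 2 - 1 ≤ t - f ∧ t ≤ 1}
      (-(u / (u + v + 1))) := by
  have hD : 0 < u + v + 1 := by linarith
  constructor
  · have hf1 : u / (u + v + 1) ^ 2 ≤ 1 := by
      rw [div_le_one (by positivity)]
      nlinarith [mul_nonneg hu hv, mul_nonneg hu hu, mul_nonneg hv hv]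
    have hs0 : 0 ≤ u / (u + v + 1) := by positivity
    have hs1 : u / (u + v + 1) ≤ 1 := by
      rw [div_le_one hD]; linarith
    refine ⟨u / (u + v + 1) ^ 2,
      u / (u + v + 1) ^ 2 + (u / (u + v + 1)) ^ 2 - 2 * (u / (u + v + 1)),
      u / (u + v + 1), ?_, by positivity, hf1, hs0, ?_, ?_, ?_, ?_⟩
    · field_simp
      ring
    · apply le_of_eq
      field_simp
    · have h1 : u / (u + v + 1) ≤ u / (u + 1) :=
        div_le_div_of_nonneg_left hu (by linarith) (by linarith)
      have h2 : u / (u + 1) + 1 / (u + 1) = 1 := by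
        field_simp
      linarith
    · apply le_of_eq
      ring
    · nlinarith
  · rintro z ⟨f, t, s, rfl, hf0, hf1, hs0, hs, hsu, ht, ht1⟩
    have hz : f * (v + 1) + s ^ 2 - 2 * s ≤ f * v + t := by nlinarith
    refine le_trans ?_ hz
    rcases hu.eq_or_lt with h | h
    · subst h
      have : s = 0 := by
        have : s ^ 2 ≤ 0 := by simpa using hs
        nlinarith [pow_eq_zero_iff (two_ne_zero) |>.1 (le_antisymm this (sq_nonneg s))]
      subst this
      have : 0 ≤ f * (v + 1) := by positivity
      simpa using this
    · rw [← neg_div, div_le_iff₀ hD]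
      have h1 : s ^ 2 * (v + 1) ≤ u * f * (v + 1) :=
        mul_le_mul_of_nonneg_right hs (by linarith)
      have h2 := mul_le_mul_of_nonneg_right h1 hD.le
      have h3 : 0 ≤ u * ((f * (v + 1) + s ^ 2 - 2 * s) * (u + v + 1) + u) := by
        nlinarith [sq_nonneg (s * (u + v + 1) - u)]
      have := nonneg_of_mul_nonneg_right h3 h
      linarith
end

section
/- For all real numbers u ≥ 0 and v ≥ 0, u/(u+v+1) equals the minimum of f·u + t over all (f, t, s) ∈ ℝ³ satisfying 0 ≤ f ≤ 1, 0 ≤ s ≤ 1, s² ≤ (v+1)·f, and (1−s)² ≤ t ≤ 1; in particular, the minimum is attained. -/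
theorem stmt_17 (u v : ℝ) (hu : 0 ≤ u) (hv : 0 ≤ v) :
    IsLeast {z : ℝ | ∃ f t s : ℝ, z = f * u + t ∧
      0 ≤ f ∧ f ≤ 1 ∧ 0 ≤ s ∧ s ≤ 1 ∧ s ^ 2 ≤ (v + 1) * f ∧
      (1 - s) ^ 2 ≤ t ∧ t ≤ 1}
      (u / (u + v + 1)) := by
  have hS : 0 < u + v + 1 := by linarith
  constructor
  · refine ⟨(v + 1) / (u + v + 1) ^ 2, (u / (u + v + 1)) ^ 2, (v + 1) / (u + v + 1),
      ?_, by positivity, ?_, by positivity, ?_, ?_, ?_, ?_⟩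
    · field_simp
      ring
    · rw [div_le_one (by positivity)]
      nlinarith [mul_nonneg hu hv, sq_nonneg u, sq_nonneg v]
    · rw [div_le_one hS]
      linarith
    · apply le_of_eq
      field_simp
    · apply le_of_eq
      congr 1
      field_simp
      ring
    · apply pow_le_one₀ (by positivity)
      rw [div_le_one hS]
      linarith
  · rintro z ⟨f, t, s, rfl, hf0, hf1, hs0, hs1, hsf, hst, ht⟩
    rw [div_le_iff₀ hS]
    have hw : 0 < v + 1 := by linarith
    have h1 : 0 ≤ (u + v + 1) * u * ((v + 1) * f - s ^ 2) :=
      mul_nonneg (mul_nonneg hS.le hu) (by linarith)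
    have h2 : 0 ≤ (u + v + 1) * (v + 1) * (t - (1 - s) ^ 2) :=
      mul_nonneg (mul_nonneg hS.le hw.le) (by linarith)
    have h3 := sq_nonneg ((u + v + 1) * s - (v + 1))
    refine le_of_mul_le_mul_left ?_ hw
    linarith
end

section
/- Let m, n ≥ 1, x ∈ ℝ^{m×n} be a real m×n matrix, and y ∈ ℝ^{m×m} be a symmetric positive semidefinite matrix. Then 2·√(Tr(xᵀ y x)) = inf { Tr(y f) + s : f ∈ ℝ^{m×m} symmetric, s ∈ ℝ, and the (m+n)×(m+n) block matrix [[f, x], [xᵀ, s·Iₙ]] is positive semidefinite }. -/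
open Matrix

open scoped MatrixOrder Matrix.Norms.L2Operator in
lemma aux_trace_mul_nonneg {m : ℕ} {y g : Matrix (Fin m) (Fin m) ℝ}
    (hy : y.PosSemidef) (hg : g.PosSemidef) : 0 ≤ (y * g).trace := by
  obtain ⟨b, rfl⟩ := CStarAlgebra.nonneg_iff_eq_star_mul_self.mp hy.nonneg
  rw [star_eq_conjTranspose, Matrix.mul_assoc, Matrix.trace_mul_comm]
  exact (hg.mul_mul_conjTranspose_same b).trace_nonneg

lemma aux_congr {m n : ℕ} (x : Matrix (Fin m) (Fin n) ℝ) (y f : Matrix (Fin m) (Fin m) ℝ)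
    (hy : y.PosSemidef) (s r : ℝ)
    (h : (Matrix.fromBlocks f x xᵀ (s • (1 : Matrix (Fin n) (Fin n) ℝ))).PosSemidef) :
    0 ≤ (y * f).trace - 2 * r * (xᵀ * y * x).trace + r ^ 2 * s * (xᵀ * y * x).trace := by
  have h1 := h.conjTranspose_mul_mul_same
    (Matrix.fromRows (1 : Matrix (Fin m) (Fin m) ℝ) (-(r • xᵀ)))
  have h2 := aux_trace_mul_nonneg hy h1
  have e : (Matrix.fromRows (1 : Matrix (Fin m) (Fin m) ℝ) (-(r • xᵀ)))ᴴ *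
      Matrix.fromBlocks f x xᵀ (s • (1 : Matrix (Fin n) (Fin n) ℝ)) *
      (Matrix.fromRows (1 : Matrix (Fin m) (Fin m) ℝ) (-(r • xᵀ))) =
      f - (2 * r) • (x * xᵀ) + (r ^ 2 * s) • (x * xᵀ) := by
    rw [Matrix.mul_assoc, Matrix.fromBlocks_mul_fromRows,
      Matrix.conjTranspose_fromRows_eq_fromCols_conjTranspose, Matrix.fromCols_mul_fromRows]
    simp only [conjTranspose_eq_transpose_of_trivial, transpose_one, transpose_neg,
      transpose_smul, transpose_transpose, Matrix.mul_one, Matrix.one_mul, Matrix.mul_neg,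
      Matrix.neg_mul, Matrix.mul_add, Matrix.smul_mul, Matrix.mul_smul]
    module
  have c : (y * (x * xᵀ)).trace = (xᵀ * y * x).trace := by
    rw [← Matrix.mul_assoc, Matrix.trace_mul_comm, Matrix.mul_assoc]
  rw [e, Matrix.mul_add, Matrix.mul_sub, Matrix.mul_smul, Matrix.mul_smul, trace_add, trace_sub,
    trace_smul, trace_smul, c] at h2
  simpa using h2

theorem stmt_19 {m n : ℕ} (hm : 1 ≤ m) (hn : 1 ≤ n)
    (x : Matrix (Fin m) (Fin n) ℝ) (y : Matrix (Fin m) (Fin m) ℝ)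
    (hy : y.PosSemidef) :
    2 * Real.sqrt ((xᵀ * y * x).trace) =
      sInf {z : ℝ | ∃ (f : Matrix (Fin m) (Fin m) ℝ) (s : ℝ), f.IsSymm ∧
        z = (y * f).trace + s ∧
        (Matrix.fromBlocks f x xᵀ (s • (1 : Matrix (Fin n) (Fin n) ℝ))).PosSemidef} := by
  have ha : 0 ≤ (xᵀ * y * x).trace := by
    have := (hy.conjTranspose_mul_mul_same x).trace_nonneg
    rwa [conjTranspose_eq_transpose_of_trivial] at this
  have c : (y * (x * xᵀ)).trace = (xᵀ * y * x).trace := by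
    rw [← Matrix.mul_assoc, Matrix.trace_mul_comm, Matrix.mul_assoc]
  have key := aux_congr x y
  generalize (xᵀ * y * x).trace = a at *
  have hsq := Real.sq_sqrt ha
  have hq := Real.sqrt_nonneg a
  generalize Real.sqrt a = q at *
  subst hsq
  have mem : ∀ s : ℝ, 0 < s → q ^ 2 / s + s ∈ {z : ℝ | ∃ (f : Matrix (Fin m) (Fin m) ℝ) (s : ℝ),
      f.IsSymm ∧ z = (y * f).trace + s ∧
        (Matrix.fromBlocks f x xᵀ (s • (1 : Matrix (Fin n) (Fin n) ℝ))).PosSemidef} := by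
    intro s hs
    refine ⟨s⁻¹ • (x * xᵀ), s, ?_, ?_, ?_⟩
    · simp [Matrix.IsSymm]
    · rw [Matrix.mul_smul, trace_smul, c, smul_eq_mul]; ring
    · have h := (Matrix.posSemidef_self_mul_conjTranspose
        (Matrix.fromRows x (s • (1 : Matrix (Fin n) (Fin n) ℝ)))).smul (inv_nonneg.mpr hs.le)
      convert h using 1
      rw [Matrix.conjTranspose_fromRows_eq_fromCols_conjTranspose, Matrix.fromRows_mul_fromCols,
        Matrix.fromBlocks_smul]
      simp [smul_smul, hs.ne']
  refine (IsGLB.csInf_eq ⟨?_, ?_⟩ ⟨_, mem 1 one_pos⟩).symm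
  · rintro z ⟨f, s, -, rfl, h⟩
    have hs : 0 ≤ s := by
      have := h.diag_nonneg (i := Sum.inr ⟨0, hn⟩)
      simpa using this
    have k := key f hy s q⁻¹ h
    rcases hq.eq_or_lt with h0 | h0
    · subst h0; simp at k ⊢; linarith
    · have e1 : 2 * q⁻¹ * q ^ 2 = 2 * q := by field_simp
      have e2 : q⁻¹ ^ 2 * s * q ^ 2 = s := by field_simp
      rw [e1, e2] at k; linarith
  · intro b hb
    refine le_of_forall_pos_le_add fun ε hε => ?_
    have h1 := hb (mem (q + ε) (by linarith))
    have h2 : q ^ 2 / (q + ε) ≤ q := by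
      rw [div_le_iff₀ (by linarith)]; nlinarith [mul_nonneg hq hε.le]
    linarith
end
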